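/- Suppose A and B are nonempty closed convex subsets of X whose relative interiors intersect (i.e., the intrinsic interior of A meets the intrinsic interior of B), and let S := aff(A ∪ B) be the affine span of A ∪ B. Let (λ_n) and (μ_n) be nonincreasing sequences in (0,1] with limits λ_∞ and μ_∞ satisfying 1 > max{λ_0, μ_0} ≥ min{λ_∞, μ_∞} > 0, and let y_{−1} ∈ S. Then there exists ρ ∈ (0,1) such that the MARP sequences (x_n) and (y_n) with starting point y_{−1} converge linearly with rate ρ to some point of A ∩ B. -/

import Mathlib

open Filter Topology

/-- The set of nearest points of `u` in `C`. -/
def projSet {X : Type*} [NormedAddCommGroup X] (C : Set X) (u : X) : Set X :=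
  {c ∈ C | ‖u - c‖ = Metric.infDist u C}

/-- MARP sequences: here `Y n` denotes `y_{n-1}`, so `Y 0 = y_{-1}` is the starting
point and `Y (n+1) = y_n`. -/
def IsMARP {X : Type*} [NormedAddCommGroup X] [NormedSpace ℝ X]
    (A B : Set X) (lam mu : ℕ → ℝ) (a x b Y : ℕ → X) : Prop :=
  ∀ n : ℕ, a n ∈ projSet A (Y n) ∧ x n = (1 - lam n) • Y n + lam n • a n ∧
    b n ∈ projSet B (x n) ∧ Y (n + 1) = (1 - mu n) • x n + mu n • b n


/-- One relaxed projection step. -/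
lemma step_aux {X : Type*} [NormedAddCommGroup X] [InnerProductSpace ℝ X]
    {A : Set X} (hA : Convex ℝ A) {y a c : X} {l e : ℝ} (ha : a ∈ projSet A y) (hc : c ∈ A)
    (he : 0 < e) (hel : e ≤ l) (hl : l ≤ 1) :
    ‖(1 - l) • y + l • a - c‖ ^ 2 ≤ ‖y - c‖ ^ 2 - e * ‖y - a‖ ^ 2 := by
  have h1 : inner ℝ (y - a) (c - a) ≤ 0 := by
    have h := (norm_eq_iInf_iff_real_inner_le_zero hA (u := y) (v := a) ha.1).1 (by
      rw [ha.2, Metric.infDist_eq_iInf]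
      simp only [dist_eq_norm])
    exact h c hc
  have e1 : (1 - l) • y + l • a - c = (y - c) - l • (y - a) := by module
  have e2 : inner ℝ (y - c) (y - a) = ‖y - a‖ ^ 2 - inner ℝ (y - a) (c - a) := by
    have : y - c = (y - a) - (c - a) := by abel
    rw [this, inner_sub_left, real_inner_self_eq_norm_sq, real_inner_comm]
  rw [e1, norm_sub_sq_real, inner_smul_right, e2, norm_smul, Real.norm_eq_abs, mul_pow, sq_abs]
  have h3 : 0 ≤ ‖y - a‖ ^ 2 := by positivity
  have h4 : l * inner ℝ (y - a) (c - a) ≤ 0 :=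
    mul_nonpos_of_nonneg_of_nonpos (by linarith) h1
  have h5 : (e + l ^ 2 - 2 * l) * ‖y - a‖ ^ 2 ≤ 0 :=
    mul_nonpos_of_nonpos_of_nonneg (by nlinarith) h3
  nlinarith

lemma ri_aux {X : Type*} [NormedAddCommGroup X] [InnerProductSpace ℝ X]
    {A : Set X} {c : X} (hc : c ∈ intrinsicInterior ℝ A) :
    ∃ r > 0, ∀ u ∈ (affineSpan ℝ A).direction, ‖u‖ ≤ r → c + u ∈ A := by
  rw [mem_intrinsicInterior] at hc
  obtain ⟨y, hy, rfl⟩ := hc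
  rw [mem_interior_iff_mem_nhds, Metric.mem_nhds_iff] at hy
  obtain ⟨s, hs, hb⟩ := hy
  refine ⟨s / 2, by positivity, fun u hu hur => ?_⟩
  have hm : (y : X) + u ∈ affineSpan ℝ A := by
    have := AffineSubspace.vadd_mem_of_mem_direction hu y.2
    rwa [vadd_eq_add, add_comm] at this
  have : (⟨(y : X) + u, hm⟩ : affineSpan ℝ A) ∈ Metric.ball y s := by
    rw [Metric.mem_ball, Subtype.dist_eq, dist_eq_norm]
    simp only [add_sub_cancel_left]
    linarith
  exact hb this

lemma decomp_aux {X : Type*} [NormedAddCommGroup X] [InnerProductSpace ℝ X]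
    [FiniteDimensional ℝ X] (U V : Submodule ℝ X) :
    ∃ K > 0, ∀ p ∈ U, ∀ q ∈ V, ∃ u ∈ U, ∃ v ∈ V, p + u = q + v ∧
      ‖u‖ ≤ K * ‖p - q‖ ∧ ‖v‖ ≤ K * ‖p - q‖ := by
  let f : (U × V) →ₗ[ℝ] X := U.subtype.coprod V.subtype
  obtain ⟨g, hg⟩ := f.rangeRestrict.exists_rightInverse_of_surjective f.range_rangeRestrict
  let G := LinearMap.toContinuousLinearMap g
  refine ⟨‖G‖ + 1, by positivity, fun p hp q hq => ?_⟩
  have hw : p - q ∈ LinearMap.range f := ⟨(⟨p, hp⟩, -⟨q, hq⟩), by simp [f, sub_eq_add_neg]⟩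
  have h1 : f (g ⟨p - q, hw⟩) = p - q := by
    have := congrArg Subtype.val (LinearMap.congr_fun hg ⟨p - q, hw⟩)
    simpa using this
  have h2 : ‖g ⟨p - q, hw⟩‖ ≤ (‖G‖ + 1) * ‖p - q‖ := by
    have : ‖G ⟨p - q, hw⟩‖ ≤ ‖G‖ * ‖p - q‖ := G.le_opNorm ⟨p - q, hw⟩
    have h3 : ‖g ⟨p - q, hw⟩‖ ≤ ‖G‖ * ‖p - q‖ := this
    nlinarith [norm_nonneg (p - q)]
  refine ⟨-(g ⟨p - q, hw⟩).1, by simp, (g ⟨p - q, hw⟩).2, by simp, ?_, ?_, ?_⟩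
  · have h4 : ((g ⟨p - q, hw⟩).1 : X) + (g ⟨p - q, hw⟩).2 = p - q := by simpa [f] using h1
    rw [← sub_eq_zero]
    have : p + -((g ⟨p - q, hw⟩).1 : X) - (q + (g ⟨p - q, hw⟩).2)
      = (p - q) - (((g ⟨p - q, hw⟩).1 : X) + (g ⟨p - q, hw⟩).2) := by abel
    rw [this, h4, sub_self]
  · rw [norm_neg]
    exact (norm_fst_le (g ⟨p - q, hw⟩)).trans h2
  · exact (norm_snd_le (g ⟨p - q, hw⟩)).trans h2

lemma shrink_aux {X : Type*} [NormedAddCommGroup X] [InnerProductSpace ℝ X]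
    {A : Set X} (hA : Convex ℝ A) {c a u : X} {r D : ℝ} {U : Submodule ℝ X} (hr : 0 < r)
    (hD : 0 < D) (h : ∀ u ∈ U, ‖u‖ ≤ r → c + u ∈ A) (ha : a ∈ A) (hu : u ∈ U)
    (huD : ‖u‖ ≤ D) : c + (r / (r + D)) • (a - c + u) ∈ A := by
  have h1 : c + (r / D) • u ∈ A := by
    refine h _ (U.smul_mem _ hu) ?_
    rw [norm_smul, Real.norm_eq_abs, abs_of_pos (by positivity)]
    calc r / D * ‖u‖ ≤ r / D * D := by gcongr
      _ = r := by field_simp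
  have h2 := hA ha h1 (a := r / (r + D)) (b := D / (r + D)) (by positivity) (by positivity)
    (by field_simp)
  convert h2 using 1
  have e1 : D / (r + D) = 1 - r / (r + D) := by field_simp; ring
  have e2 : r / (r + D) = (1 - r / (r + D)) * (r / D) := by field_simp; ring
  rw [e1, smul_add (1 - r / (r + D)) c, smul_smul, ← e2]
  module

/-- Bounded linear regularity. -/
lemma regularity_aux {X : Type*} [NormedAddCommGroup X] [InnerProductSpace ℝ X]
    [FiniteDimensional ℝ X] {A B : Set X} (hA : Convex ℝ A) (hB : Convex ℝ B) {c : X}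
    (hcA : c ∈ intrinsicInterior ℝ A) (hcB : c ∈ intrinsicInterior ℝ B) (R : ℝ) (hR : 0 ≤ R) :
    ∃ κ ≥ 0, ∀ a ∈ A, ∀ b ∈ B, ‖a - c‖ ≤ R → ∃ z ∈ A ∩ B, ‖a - z‖ ≤ κ * ‖a - b‖ := by
  obtain ⟨r1, hr1, h1⟩ := ri_aux hcA
  obtain ⟨r2, hr2, h2⟩ := ri_aux hcB
  obtain ⟨K, hK, hd⟩ := decomp_aux (affineSpan ℝ A).direction (affineSpan ℝ B).direction
  obtain ⟨r, hr, hra, hrb⟩ : ∃ r > 0, r ≤ r1 ∧ r ≤ r2 :=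
    ⟨min r1 r2, lt_min hr1 hr2, min_le_left _ _, min_le_right _ _⟩
  refine ⟨K * (R / r + 1), by positivity, fun a ha b hb haR => ?_⟩
  by_cases hab : a = b
  · exact ⟨a, ⟨ha, hab ▸ hb⟩, by simp [hab]⟩
  have hpos : 0 < ‖a - b‖ := norm_pos_iff.2 (sub_ne_zero.2 hab)
  have hcA' := intrinsicInterior_subset hcA
  have hcB' := intrinsicInterior_subset hcB
  obtain ⟨u, hu, v, hv, huv, hun, hvn⟩ := hd (a - c)
    (AffineSubspace.vsub_mem_direction (subset_affineSpan ℝ A ha) (subset_affineSpan ℝ A hcA'))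
    (b - c)
    (AffineSubspace.vsub_mem_direction (subset_affineSpan ℝ B hb) (subset_affineSpan ℝ B hcB'))
  rw [sub_sub_sub_cancel_right] at hun hvn
  set D := K * ‖a - b‖ with hDdef
  have hD : 0 < D := by positivity
  refine ⟨c + (r / (r + D)) • (a - c + u), ⟨?_, ?_⟩, ?_⟩
  · exact shrink_aux hA hr hD (fun w hw hwr => h1 w hw (hwr.trans hra)) ha hu hun
  · rw [huv]
    exact shrink_aux hB hr hD (fun w hw hwr => h2 w hw (hwr.trans hrb)) hb hv hvn
  · have e1 : D / (r + D) = 1 - r / (r + D) := by field_simp; ring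
    have e : a - (c + (r / (r + D)) • (a - c + u))
        = (D / (r + D)) • (a - c) - (r / (r + D)) • u := by
      rw [e1]; module
    rw [e]
    calc _ ≤ ‖(D / (r + D)) • (a - c)‖ + ‖(r / (r + D)) • u‖ := norm_sub_le _ _
      _ = (D / (r + D)) * ‖a - c‖ + (r / (r + D)) * ‖u‖ := by
        rw [norm_smul, norm_smul, Real.norm_eq_abs, Real.norm_eq_abs,
          abs_of_pos (by positivity), abs_of_pos (by positivity)]
      _ ≤ (D / r) * R + 1 * D := by
        gcongr
        · linarith
        · rw [div_le_one (by positivity)]; linarith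
      _ = K * (R / r + 1) * ‖a - b‖ := by rw [hDdef]; ring

/-- Corollary 5.13 (two convex sets): the MARP converges linearly to a point of
the intersection. -/
theorem marp_two_convex_sets
    {X : Type*} [NormedAddCommGroup X] [InnerProductSpace ℝ X] [FiniteDimensional ℝ X]
    (A B : Set X) (hA : A.Nonempty) (hAclosed : IsClosed A) (hAconv : Convex ℝ A)
    (hB : B.Nonempty) (hBclosed : IsClosed B) (hBconv : Convex ℝ B)
    (hri : (intrinsicInterior ℝ A ∩ intrinsicInterior ℝ B).Nonempty)
    (S : Set X) (hS : S = (affineSpan ℝ (A ∪ B) : Set X))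
    (lam mu : ℕ → ℝ) (hlam : ∀ n, lam n ∈ Set.Ioc (0 : ℝ) 1)
    (hmu : ∀ n, mu n ∈ Set.Ioc (0 : ℝ) 1)
    (hlam_mono : ∀ n : ℕ, lam (n + 1) ≤ lam n) (hmu_mono : ∀ n : ℕ, mu (n + 1) ≤ mu n)
    (laminf muinf : ℝ)
    (hlaminf : Tendsto lam atTop (nhds laminf)) (hmuinf : Tendsto mu atTop (nhds muinf))
    (hα₀lt : max (lam 0) (mu 0) < 1) (hαinf : 0 < min laminf muinf)
    (a x b Y : ℕ → X) (hMARP : IsMARP A B lam mu a x b Y) (hstart : Y 0 ∈ S) :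
    ∃ ρ : ℝ, ρ ∈ Set.Ioo (0 : ℝ) 1 ∧
      ∃ cbar ∈ A ∩ B, ∃ M : ℝ, 0 ≤ M ∧
        ∀ n : ℕ, max (‖x n - cbar‖) (‖Y (n + 1) - cbar‖) ≤ M * ρ ^ n := by
  obtain ⟨c, hcA, hcB⟩ := hri
  have hcA' := intrinsicInterior_subset hcA
  have hcB' := intrinsicInterior_subset hcB
  obtain ⟨e, he, hel, hem⟩ : ∃ e > 0, (∀ n, e ≤ lam n) ∧ ∀ n, e ≤ mu n :=
    ⟨min laminf muinf, hαinf,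
      fun n => (min_le_left _ _).trans ((antitone_nat_of_succ_le hlam_mono).le_of_tendsto hlaminf n),
      fun n => (min_le_right _ _).trans ((antitone_nat_of_succ_le hmu_mono).le_of_tendsto hmuinf n)⟩
  have he1 : e ≤ 1 := (hel 0).trans (hlam 0).2
  -- Fejer estimates
  have hx : ∀ n, ∀ z ∈ A, ‖x n - z‖ ^ 2 ≤ ‖Y n - z‖ ^ 2 - e * ‖Y n - a n‖ ^ 2 := by
    intro n z hz
    obtain ⟨h1, h2, h3, h4⟩ := hMARP n
    rw [h2]
    exact step_aux hAconv h1 hz he (hel n) (hlam n).2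
  have hy : ∀ n, ∀ z ∈ B, ‖Y (n + 1) - z‖ ^ 2 ≤ ‖x n - z‖ ^ 2 - e * ‖x n - b n‖ ^ 2 := by
    intro n z hz
    obtain ⟨h1, h2, h3, h4⟩ := hMARP n
    rw [h4]
    exact step_aux hBconv h3 hz he (hem n) (hmu n).2
  have hx' : ∀ n, ∀ z ∈ A, ‖x n - z‖ ≤ ‖Y n - z‖ := by
    intro n z hz
    refine (pow_le_pow_iff_left₀ (norm_nonneg _) (norm_nonneg _) two_ne_zero).1 ?_
    have := hx n z hz
    have : 0 ≤ e * ‖Y n - a n‖ ^ 2 := by positivity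
    linarith
  have hy' : ∀ n, ∀ z ∈ A ∩ B, ‖Y (n + 1) - z‖ ≤ ‖Y n - z‖ := by
    intro n z hz
    refine le_trans ?_ (hx' n z hz.1)
    refine (pow_le_pow_iff_left₀ (norm_nonneg _) (norm_nonneg _) two_ne_zero).1 ?_
    have := hy n z hz.2
    have : 0 ≤ e * ‖x n - b n‖ ^ 2 := by positivity
    linarith
  have hfej : ∀ z ∈ A ∩ B, Antitone fun n => ‖Y n - z‖ := fun z hz =>
    antitone_nat_of_succ_le fun n => hy' n z hz
  obtain ⟨κ, hκ, hreg⟩ := regularity_aux hAconv hBconv hcA hcB (2 * ‖Y 0 - c‖) (by positivity)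
  have hCcl : IsClosed (A ∩ B) := hAclosed.inter hBclosed
  have hCne : (A ∩ B).Nonempty := ⟨c, hcA', hcB'⟩
  set d : ℕ → ℝ := fun n => Metric.infDist (Y n) (A ∩ B) with hd
  have hd0 : ∀ n, 0 ≤ d n := fun n => Metric.infDist_nonneg
  have hdκ : ∀ n, d n ≤ (κ + 1) * (‖Y n - a n‖ + ‖x n - b n‖) := by
    intro n
    obtain ⟨h1, h2, h3, h4⟩ := hMARP n
    have haY : ‖Y n - a n‖ ≤ ‖Y n - c‖ := by
      rw [h1.2, ← dist_eq_norm]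
      exact Metric.infDist_le_dist_of_mem hcA'
    have hY0 : ‖Y n - c‖ ≤ ‖Y 0 - c‖ := hfej c ⟨hcA', hcB'⟩ (Nat.zero_le n)
    have hac : ‖a n - c‖ ≤ 2 * ‖Y 0 - c‖ := by
      have := norm_sub_le_norm_sub_add_norm_sub (a n) (Y n) c
      rw [norm_sub_rev (a n) (Y n)] at this
      linarith
    obtain ⟨z, hz, hzn⟩ := hreg (a n) h1.1 (b n) h3.1 hac
    have hax : ‖a n - x n‖ ≤ ‖Y n - a n‖ := by
      have : a n - x n = -((1 - lam n) • (Y n - a n)) := by rw [h2]; module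
      rw [this, norm_neg, norm_smul, Real.norm_eq_abs, abs_of_nonneg (by linarith [(hlam n).2])]
      have := (hlam n).1
      nlinarith [norm_nonneg (Y n - a n)]
    have hab := norm_sub_le_norm_sub_add_norm_sub (a n) (x n) (b n)
    have hdz : d n ≤ ‖Y n - z‖ := by
      rw [← dist_eq_norm]
      exact Metric.infDist_le_dist_of_mem hz
    have hYz := norm_sub_le_norm_sub_add_norm_sub (Y n) (a n) z
    have : κ * ‖a n - b n‖ ≤ κ * (‖Y n - a n‖ + ‖x n - b n‖) := by gcongr; linarith
    nlinarith [norm_nonneg (x n - b n)]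
  have hproj : ∀ n, ∃ z ∈ A ∩ B, d n = ‖Y n - z‖ := by
    intro n
    obtain ⟨z, hz, h⟩ := hCcl.exists_infDist_eq_dist hCne (Y n)
    exact ⟨z, hz, by rw [← dist_eq_norm]; exact h⟩
  obtain ⟨q, hq⟩ : ∃ q, q = 1 - e / (2 * (κ + 1) ^ 2) := ⟨_, rfl⟩
  have hq1 : q < 1 := by rw [hq]; have : 0 < e / (2 * (κ + 1) ^ 2) := by positivity
                         linarith
  have hq0 : 0 < q := by
    rw [hq, sub_pos, div_lt_one (by positivity)]
    nlinarith
  have hdq : ∀ n, d (n + 1) ^ 2 ≤ q * d n ^ 2 := by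
    intro n
    obtain ⟨z, hz, hzd⟩ := hproj n
    have h1 := hx n z hz.1
    have h2 := hy n z hz.2
    have h3 : d (n + 1) ≤ ‖Y (n + 1) - z‖ := by
      rw [← dist_eq_norm]
      exact Metric.infDist_le_dist_of_mem hz
    have h4 : d (n + 1) ^ 2 ≤ ‖Y (n + 1) - z‖ ^ 2 := pow_le_pow_left₀ (hd0 _) h3 2
    have h5 : d n ^ 2 ≤ ((κ + 1) * (‖Y n - a n‖ + ‖x n - b n‖)) ^ 2 :=
      pow_le_pow_left₀ (hd0 _) (hdκ n) 2
    have h6 : d n ^ 2 ≤ 2 * (κ + 1) ^ 2 * (‖Y n - a n‖ ^ 2 + ‖x n - b n‖ ^ 2) := by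
      rw [mul_pow] at h5
      have : (‖Y n - a n‖ + ‖x n - b n‖) ^ 2 ≤ 2 * (‖Y n - a n‖ ^ 2 + ‖x n - b n‖ ^ 2) := by
        nlinarith [sq_nonneg (‖Y n - a n‖ - ‖x n - b n‖)]
      have := mul_le_mul_of_nonneg_left this (sq_nonneg (κ + 1))
      linarith
    have h7 : e / (2 * (κ + 1) ^ 2) * d n ^ 2 ≤ e * (‖Y n - a n‖ ^ 2 + ‖x n - b n‖ ^ 2) := by
      rw [div_mul_eq_mul_div, div_le_iff₀ (by positivity)]
      have := mul_le_mul_of_nonneg_left h6 he.le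
      linarith
    rw [← hzd] at h1
    rw [hq]
    linarith
  obtain ⟨ρ, hρ⟩ : ∃ ρ, ρ = Real.sqrt q := ⟨_, rfl⟩
  have hρ0 : 0 < ρ := by rw [hρ]; exact Real.sqrt_pos.2 hq0
  have hρ2 : ρ ^ 2 = q := by rw [hρ]; exact Real.sq_sqrt hq0.le
  have hρ1 : ρ < 1 := by nlinarith
  have hstep : ∀ n, d (n + 1) ≤ ρ * d n := by
    intro n
    refine (pow_le_pow_iff_left₀ (hd0 _) (mul_nonneg hρ0.le (hd0 n)) two_ne_zero).1 ?_
    rw [mul_pow, hρ2]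
    exact hdq n
  have hgeo : ∀ n, d n ≤ d 0 * ρ ^ n := by
    intro n
    induction n with
    | zero => simp
    | succ n ih =>
      calc d (n + 1) ≤ ρ * d n := hstep n
        _ ≤ ρ * (d 0 * ρ ^ n) := by gcongr
        _ = d 0 * ρ ^ (n + 1) := by ring
  have hdist : ∀ n m, n ≤ m → dist (Y n) (Y m) ≤ 2 * d 0 * ρ ^ n := by
    intro n m hnm
    obtain ⟨z, hz, hzd⟩ := hproj n
    have h1 : ‖Y m - z‖ ≤ ‖Y n - z‖ := hfej z hz hnm
    have h2 := norm_sub_le_norm_sub_add_norm_sub (Y n) z (Y m)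
    rw [norm_sub_rev z] at h2
    rw [dist_eq_norm]
    have := hgeo n
    linarith
  have htend : Tendsto (fun n => 2 * d 0 * ρ ^ n) atTop (𝓝 0) := by
    simpa using (tendsto_pow_atTop_nhds_zero_of_lt_one hρ0.le hρ1).const_mul (2 * d 0)
  have hcau : CauchySeq Y := cauchySeq_of_le_tendsto_0' (fun n => 2 * d 0 * ρ ^ n) hdist htend
  obtain ⟨w, hw⟩ := cauchySeq_tendsto_of_complete hcau
  have hwd : ∀ n, ‖Y n - w‖ ≤ 2 * d 0 * ρ ^ n := by
    intro n
    rw [← dist_eq_norm]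
    refine le_of_tendsto (tendsto_const_nhds.dist hw) ?_
    filter_upwards [eventually_ge_atTop n] with m hm using hdist n m hm
  have hwC : w ∈ A ∩ B := by
    rw [hCcl.mem_iff_infDist_zero hCne]
    have h1 : Tendsto d atTop (𝓝 (Metric.infDist w (A ∩ B))) :=
      ((Metric.continuous_infDist_pt (A ∩ B)).tendsto w).comp hw
    have h2 : Tendsto d atTop (𝓝 0) :=
      squeeze_zero hd0 (fun n => (hgeo n).trans (by
        have : 0 ≤ d 0 * ρ ^ n := mul_nonneg (hd0 0) (by positivity)
        linarith)) htend
    exact tendsto_nhds_unique h1 h2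
  refine ⟨ρ, ⟨hρ0, hρ1⟩, w, hwC, 2 * d 0, by linarith [hd0 0], fun n => max_le ?_ ?_⟩
  · exact (hx' n w hwC.1).trans (hwd n)
  · exact (hy' n w hwC).trans (hwd n)
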